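/- arXiv:2406.18835 — 6 statements merged into one kernel-verified Lean document; each statement's English description precedes it below -/
import Mathlib

section
/- Let G be a finite simple graph on vertex set V equipped with a linear order that is a perfect elimination ordering (i.e., for every vertex v the left neighborhood N^left(v) is a clique). Then for any positive integer k, G is k-colorable if and only if |N^left(v)| ≤ k − 1 for every vertex v. -/
/-!
If `G` is `k`-colorable, a vertex and its left neighborhood form a clique, whose vertices receive
distinct colors. Conversely, coloring the vertices of a finite set greedily in increasing order
never uses up all `k` colors on the left neighbors of the next vertex, and a graph whose finite
induced subgraphs are all `k`-colorable is `k`-colorable by the de Bruijn–Erdős theorem.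
-/

section Clique

variable {V : Type*} {G : SimpleGraph V} {k : ℕ} {s : Set V}

theorem encard_le_of_isClique_of_colorable (hs : G.IsClique s) (hG : G.Colorable k) :
    s.encard ≤ k := by
  obtain ⟨C⟩ := hG
  have hinj : s.InjOn C := fun a ha b hb hab ↦ by
    by_contra hne
    exact C.valid (hs ha hb hne) hab
  calc s.encard = (C '' s).encard := hinj.encard_image.symm
    _ ≤ (Set.univ : Set (Fin k)).encard := Set.encard_le_encard (Set.subset_univ _)
    _ = k := by simp

theorem encard_lt_of_isClique_of_forall_adj_of_colorable {v : V} (hs : G.IsClique s)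
    (hv : ∀ u ∈ s, G.Adj v u) (hG : G.Colorable k) : s.encard < k := by
  have hvs : v ∉ s := fun h ↦ G.irrefl (hv v h)
  have hle : (insert v s).encard ≤ k :=
    encard_le_of_isClique_of_colorable ((G.isClique_insert_of_notMem hvs).2 ⟨hs, hv⟩) hG
  rw [Set.encard_insert_of_notMem hvs] at hle
  have hfin : s.encard ≠ ⊤ := ne_top_of_le_ne_top (ENat.natCast_ne_top k) (le_self_add.trans hle)
  exact (ENat.add_one_le_iff hfin).1 hle

end Clique

section Extension

variable {V : Type*} {G : SimpleGraph V} {k : ℕ}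

theorem colorable_induce_insert {s : Set V} {v : V} (hs : (G.induce s).Colorable k)
    (hv : {u ∈ s | G.Adj u v}.encard < k) : (G.induce (insert v s)).Colorable k := by
  classical
  obtain ⟨C⟩ := hs
  obtain ⟨x, hx⟩ : ∃ x, ∀ u : s, G.Adj u v → C u ≠ x := by
    let usedColors : Set (Fin k) := C '' (Subtype.val ⁻¹' {u ∈ s | G.Adj u v})
    have hlt : usedColors.encard < k :=
      ((Set.encard_image_le _ _).trans (Set.encard_preimage_val_le_encard_right _ _)).trans_lt hv
    have hne : usedColors ≠ Set.univ := fun h ↦ by simp [h] at hlt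
    obtain ⟨x, hx⟩ := (Set.ne_univ_iff_exists_notMem _).1 hne
    exact ⟨x, fun u hu hux ↦ hx ⟨u, ⟨u.2, hu⟩, hux⟩⟩
  refine ⟨.mk (fun u ↦ if hu : u.1 ∈ s then C ⟨u, hu⟩ else x) ?_⟩
  rintro ⟨a, hav⟩ ⟨b, hbv⟩ (hab : G.Adj a b)
  by_cases ha : a ∈ s <;> by_cases hb : b ∈ s <;> simp only [ha, hb, dite_true, dite_false]
  · exact C.valid hab
  · obtain rfl := hbv.resolve_right hb
    exact hx ⟨a, ha⟩ hab
  · obtain rfl := hav.resolve_right ha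
    exact (hx ⟨b, hb⟩ hab.symm).symm
  · exact absurd ((hav.resolve_right ha).trans (hbv.resolve_right hb).symm) hab.ne

theorem colorable_of_forall_finset_colorable_induce
    (h : ∀ s : Finset V, (G.induce (s : Set V)).Colorable k) : G.Colorable k := by
  refine SimpleGraph.nonempty_hom_of_forall_finite_subgraph_hom fun H hH ↦ ?_
  let toInduce : H.coe →g G.induce (hH.toFinset : Set V) :=
    ⟨fun v ↦ ⟨v, by simp⟩, fun hab ↦ H.adj_sub hab⟩
  exact ((h hH.toFinset).of_hom toInduce).some

end Extension

section LeftNeighbors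

variable {V : Type*} [LinearOrder V] {G : SimpleGraph V} {k : ℕ}

/-- The left neighborhood `N^left(v)`: the neighbors of `v` that precede `v` in the vertex order.
A perfect elimination ordering is one in which all of these sets are cliques. -/
def leftNeighborSet (G : SimpleGraph V) (v : V) : Set V :=
  {u | G.Adj u v ∧ u < v}

theorem colorable_induce_of_forall_encard_leftNeighborSet_lt
    (h : ∀ v, (leftNeighborSet G v).encard < k) (s : Finset V) :
    (G.induce (s : Set V)).Colorable k := by
  induction s using Finset.induction_on_max with
  | empty =>
    have : IsEmpty ((∅ : Finset V) : Set V) := by simp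
    exact .of_isEmpty _
  | insert v s hv ih =>
    rw [Finset.coe_insert]
    have hsub : {u ∈ (s : Set V) | G.Adj u v} ⊆ leftNeighborSet G v :=
      fun u hu ↦ ⟨hu.2, hv u hu.1⟩
    exact colorable_induce_insert ih ((Set.encard_le_encard hsub).trans_lt (h v))

-- `encard` rather than `ncard`, as the latter assigns an infinite left neighborhood the value `0`.
theorem stmt0_general (G : SimpleGraph V) (hpeo : ∀ v, G.IsClique (leftNeighborSet G v)) (k : ℕ) :
    G.Colorable k ↔ ∀ v, (leftNeighborSet G v).encard < k :=
  ⟨fun hG v ↦ encard_lt_of_isClique_of_forall_adj_of_colorable (hpeo v) (fun _ hu ↦ hu.1.symm) hG,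
    fun h ↦ colorable_of_forall_finset_colorable_induce
      (colorable_induce_of_forall_encard_leftNeighborSet_lt h)⟩

end LeftNeighbors

/-- If a linear order on the vertices of a finite simple graph `G` is a perfect elimination
ordering (every left neighborhood is a clique), then for any positive integer `k`, `G` is
`k`-colorable iff every left neighborhood has at most `k - 1` vertices. -/
theorem stmt0 {V : Type*} [Fintype V] [LinearOrder V] (G : SimpleGraph V)
    (hpeo : ∀ v : V, G.IsClique {u | G.Adj u v ∧ u < v})
    (k : ℕ) (hk : 0 < k) :
    G.Colorable k ↔ ∀ v : V, ({u | G.Adj u v ∧ u < v} : Set V).ncard ≤ k - 1 := by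
  simpa only [leftNeighborSet, ← (Set.toFinite _).cast_ncard_eq, Nat.cast_lt,
    Nat.le_sub_one_iff_lt hk] using stmt0_general G hpeo k
end

section
/- Let F be a finite index set, let (Y_u)_{u∈F} be pairwise independent random variables on a probability space, each taking values in {0,1}, with E[Y_u] = (1−f)·x_u where x_u ∈ [0,1] for each u, 0 < f ≤ 1, and Σ_{u∈F} x_u ≤ k for a real k > 0. Then Pr[Σ_{u∈F} Y_u ≥ k] ≤ 1/(f²·k). -/
open MeasureTheory ProbabilityTheory

/-!
A random variable with values in `[0, 1]` has variance at most its mean, and nonpositive covariances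
only decrease the variance of a sum, so `Var S ≤ E S ≤ (1 - f) k` for the sum `S` in question. The
event `k ≤ S` is a deviation of at least `k - E S ≥ f k` from the mean, and Chebyshev's inequality
bounds its probability by `(1 - f) k / (f k) ^ 2`.
-/

section

variable {Ω ι : Type*} {mΩ : MeasurableSpace Ω} {μ : Measure Ω}

theorem variance_le_integral_of_mem_Icc_zero_one [IsProbabilityMeasure μ] {X : Ω → ℝ}
    (hX : AEMeasurable X μ) (h01 : ∀ᵐ ω ∂μ, X ω ∈ Set.Icc 0 1) :
    Var[X; μ] ≤ μ[X] :=
  calc Var[X; μ] ≤ (1 - μ[X]) * (μ[X] - 0) := variance_le_sub_mul_sub h01 hX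
    _ ≤ μ[X] := by linarith [sq_nonneg μ[X]]

theorem variance_sum_le_sum_variance_of_covariance_nonpos [IsFiniteMeasure μ] {s : Finset ι}
    {X : ι → Ω → ℝ} (hX : ∀ i ∈ s, MemLp (X i) 2 μ)
    (hcov : ∀ i ∈ s, ∀ j ∈ s, i ≠ j → cov[X i, X j; μ] ≤ 0) :
    Var[∑ i ∈ s, X i; μ] ≤ ∑ i ∈ s, Var[X i; μ] := by
  classical
  rw [variance_sum' hX]
  refine Finset.sum_le_sum fun i hi ↦ ?_
  have h_off : ∑ j ∈ s.erase i, cov[X i, X j; μ] ≤ 0 :=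
    Finset.sum_nonpos fun j hj ↦
      hcov i hi j (Finset.mem_of_mem_erase hj) (Finset.ne_of_mem_erase hj).symm
  rw [← Finset.add_sum_erase s _ hi, covariance_self (hX i hi).aemeasurable]
  exact add_le_of_nonpos_right h_off

theorem measureReal_ge_le_variance_div_sq [IsFiniteMeasure μ] {X : Ω → ℝ} (hX : MemLp X 2 μ)
    {c : ℝ} (hc : μ[X] < c) :
    μ.real {ω | c ≤ X ω} ≤ Var[X; μ] / (c - μ[X]) ^ 2 := by
  have h_sub : {ω | c ≤ X ω} ⊆ {ω | c - μ[X] ≤ |X ω - μ[X]|} := fun ω hω ↦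
    (sub_le_sub_right (show c ≤ X ω from hω) _).trans (le_abs_self (X ω - μ[X]))
  exact ENNReal.toReal_le_of_le_ofReal (div_nonneg (variance_nonneg X μ) (sq_nonneg _))
    ((measure_mono h_sub).trans (meas_ge_le_variance_div_sq hX (sub_pos.2 hc)))

theorem measureReal_sum_ge_le_of_covariance_nonpos [IsProbabilityMeasure μ] {s : Finset ι}
    {X : ι → Ω → ℝ} (hX : ∀ i ∈ s, AEMeasurable (X i) μ)
    (h01 : ∀ i ∈ s, ∀ᵐ ω ∂μ, X i ω ∈ Set.Icc 0 1)
    (hcov : ∀ i ∈ s, ∀ j ∈ s, i ≠ j → cov[X i, X j; μ] ≤ 0)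
    {c : ℝ} (hc : ∑ i ∈ s, μ[X i] < c) :
    μ.real {ω | c ≤ ∑ i ∈ s, X i ω} ≤ (∑ i ∈ s, μ[X i]) / (c - ∑ i ∈ s, μ[X i]) ^ 2 := by
  have hL2 : ∀ i ∈ s, MemLp (X i) 2 μ := fun i hi ↦
    memLp_of_bounded (h01 i hi) (hX i hi).aestronglyMeasurable 2
  have h_mean : μ[∑ i ∈ s, X i] = ∑ i ∈ s, μ[X i] := by
    simp only [Finset.sum_apply]
    exact integral_finsetSum s fun i hi ↦ (hL2 i hi).integrable one_le_two
  have h_var : Var[∑ i ∈ s, X i; μ] ≤ ∑ i ∈ s, μ[X i] :=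
    (variance_sum_le_sum_variance_of_covariance_nonpos hL2 hcov).trans
      (Finset.sum_le_sum fun i hi ↦ variance_le_integral_of_mem_Icc_zero_one (hX i hi) (h01 i hi))
  calc μ.real {ω | c ≤ ∑ i ∈ s, X i ω} = μ.real {ω | c ≤ (∑ i ∈ s, X i) ω} := by
        simp only [Finset.sum_apply]
    _ ≤ Var[∑ i ∈ s, X i; μ] / (c - μ[∑ i ∈ s, X i]) ^ 2 :=
        measureReal_ge_le_variance_div_sq (memLp_finsetSum' s hL2) (h_mean ▸ hc)
    _ ≤ (∑ i ∈ s, μ[X i]) / (c - ∑ i ∈ s, μ[X i]) ^ 2 := by rw [h_mean]; gcongr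

theorem stmt5_general [IsProbabilityMeasure μ] (F : Finset ι) (Y : ι → Ω → ℝ) (f k : ℝ)
    (hf : 0 < f) (hk : 0 < k)
    (hmeas : ∀ u ∈ F, AEMeasurable (Y u) μ)
    (h01 : ∀ u ∈ F, ∀ᵐ ω ∂μ, Y u ω ∈ Set.Icc 0 1)
    (hcov : ∀ u ∈ F, ∀ v ∈ F, u ≠ v → cov[Y u, Y v; μ] ≤ 0)
    (hmean : ∑ u ∈ F, μ[Y u] ≤ (1 - f) * k) :
    μ.real {ω | k ≤ ∑ u ∈ F, Y u ω} ≤ (1 - f) / (f ^ 2 * k) := by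
  have hfk : 0 < f * k := mul_pos hf hk
  have h_gap : f * k ≤ k - ∑ u ∈ F, μ[Y u] := by linarith
  have h_nonneg : 0 ≤ ∑ u ∈ F, μ[Y u] := Finset.sum_nonneg fun u hu ↦
    integral_nonneg_of_ae ((h01 u hu).mono fun _ h ↦ h.1)
  calc μ.real {ω | k ≤ ∑ u ∈ F, Y u ω}
      ≤ (∑ u ∈ F, μ[Y u]) / (k - ∑ u ∈ F, μ[Y u]) ^ 2 :=
        measureReal_sum_ge_le_of_covariance_nonpos hmeas h01 hcov (by linarith)
    _ ≤ (1 - f) * k / (f * k) ^ 2 := by gcongr; exact h_nonneg.trans hmean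
    _ = (1 - f) / (f ^ 2 * k) := by field_simp

end

/-- If `(Y u)_{u ∈ F}` are pairwise independent `{0,1}`-valued random variables with means
`E[Y u] = (1 - f) * x u`, `x u ∈ [0,1]`, `0 < f ≤ 1`, and `∑ x u ≤ k`, then
`Pr[∑ Y u ≥ k] ≤ 1 / (f² k)`. -/
theorem stmt5 {Ω : Type*} [MeasureSpace Ω] [IsProbabilityMeasure (volume : Measure Ω)]
    {ι : Type*} (F : Finset ι) (Y : ι → Ω → ℝ) (x : ι → ℝ) (f k : ℝ)
    (hf0 : 0 < f) (hf1 : f ≤ 1) (hk : 0 < k)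
    (hmeas : ∀ u ∈ F, Measurable (Y u))
    (h01 : ∀ u ∈ F, ∀ ω, Y u ω = 0 ∨ Y u ω = 1)
    (hindep : ∀ u ∈ F, ∀ u' ∈ F, u ≠ u' → IndepFun (Y u) (Y u') volume)
    (hmean : ∀ u ∈ F, ∫ ω, Y u ω = (1 - f) * x u)
    (hx : ∀ u ∈ F, 0 ≤ x u ∧ x u ≤ 1)
    (hsum : ∑ u ∈ F, x u ≤ k) :
    (volume {ω | k ≤ ∑ u ∈ F, Y u ω}).toReal ≤ 1 / (f ^ 2 * k) := by
  have hIcc : ∀ u ∈ F, ∀ᵐ ω, Y u ω ∈ Set.Icc 0 1 := fun u hu ↦ .of_forall fun ω ↦ by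
    rcases h01 u hu ω with h | h <;> simp [h]
  have hL2 : ∀ u ∈ F, MemLp (Y u) 2 := fun u hu ↦
    memLp_of_bounded (hIcc u hu) (hmeas u hu).aestronglyMeasurable 2
  have hcov : ∀ u ∈ F, ∀ v ∈ F, u ≠ v → cov[Y u, Y v] ≤ 0 := fun u hu v hv huv ↦
    ((hindep u hu v hv huv).covariance_eq_zero (hL2 u hu) (hL2 v hv)).le
  have hmean_sum : ∑ u ∈ F, ∫ ω, Y u ω ≤ (1 - f) * k := by
    rw [Finset.sum_congr rfl hmean, ← Finset.mul_sum]
    exact mul_le_mul_of_nonneg_left hsum (sub_nonneg.2 hf1)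
  exact (stmt5_general F Y f k hf0 hk (fun u hu ↦ (hmeas u hu).aemeasurable) hIcc hcov
    hmean_sum).trans (by gcongr; linarith)
end

section
/- Let c > 1, h > 0, and γ ≥ 0 be real numbers, let N be a positive integer, and let k_j = h·c^j for 0 ≤ j ≤ N with k_{−1} = 0. Let p_{−1}, p_0, …, p_N be real numbers with p_{−1} = 1 and p_N = 0. Then Σ_{j=0}^{N} (p_{j−1} − p_j)·γ·(Σ_{i=0}^{j−1} k_i + (k_j+1)/2) = (γ/2)·((c+1)/(c−1))·Σ_{j=0}^{N} p_{j−1}·(k_j − k_{j−1}) + γ·(1/2 − h/(c−1)). -/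
/-!
Since `k_0 + ⋯ + k_{j-1} = (k_j - h) / (c - 1)`, the color bound for iteration `j` is an affine
function of `k_j`, with slope `(c + 1) / (2 (c - 1))` and intercept `1 / 2 - h / (c - 1)`. The
weights `p_{j-1} - p_j` add up to `1`, so the intercept contributes itself; the linear part is
summed by parts, and its boundary terms vanish because `k_{-1} = 0` and `p_N = 0`.
-/

theorem sum_range_sub_succ_mul_succ {R : Type*} [NonUnitalNonAssocRing R] (f g : ℕ → R) (n : ℕ) :
    ∑ j ∈ Finset.range n, (f j - f (j + 1)) * g (j + 1) =
      ∑ j ∈ Finset.range n, f j * (g (j + 1) - g j) + (f 0 * g 0 - f n * g n) := by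
  rw [← Finset.sum_range_sub' (fun j => f j * g j), ← Finset.sum_add_distrib]
  refine Finset.sum_congr rfl fun j _ => ?_
  rw [sub_mul, mul_sub, sub_add_sub_cancel]

section ColorThreshold

variable {K : Type*} [Field K]

/-- The geometric color thresholds `k_j = h c^j` with `k_{-1} = 0`, shifted by one so that they are
indexed by `ℕ`: the value at `j` is `k_{j-1}`, just as `P j` encodes `p_{j-1}`. -/
def shiftedThreshold (c h : K) (j : ℕ) : K :=
  if j = 0 then 0 else h * c ^ (j - 1)

theorem shiftedThreshold_zero (c h : K) : shiftedThreshold c h 0 = 0 :=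
  if_pos rfl

theorem shiftedThreshold_succ (c h : K) (j : ℕ) : shiftedThreshold c h (j + 1) = h * c ^ j :=
  if_neg j.succ_ne_zero

theorem sum_range_mul_pow_add_half [NeZero (2 : K)] {c : K} (hc : c ≠ 1) (h : K) (j : ℕ) :
    ∑ i ∈ Finset.range j, h * c ^ i + (h * c ^ j + 1) / 2 =
      (c + 1) / (c - 1) / 2 * (h * c ^ j) + (1 / 2 - h / (c - 1)) := by
  have hc' : c - 1 ≠ 0 := sub_ne_zero.mpr hc
  rw [← Finset.mul_sum, geom_sum_eq hc]
  field_simp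
  ring

theorem stmt9_general [NeZero (2 : K)] {c : K} (hc : c ≠ 1) (h γ : K) (N : ℕ)
    (P : ℕ → K) (hP0 : P 0 = 1) (hPN : P (N + 1) = 0) :
    ∑ j ∈ Finset.range (N + 1), (P j - P (j + 1)) * γ *
        ((∑ i ∈ Finset.range j, h * c ^ i) + (h * c ^ j + 1) / 2)
      = (γ / 2) * ((c + 1) / (c - 1)) *
          (∑ j ∈ Finset.range (N + 1),
            P j * (h * c ^ j - if j = 0 then 0 else h * c ^ (j - 1)))
        + γ * (1 / 2 - h / (c - 1)) := by
  let k : ℕ → K := shiftedThreshold c h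
  have k_zero : k 0 = 0 := shiftedThreshold_zero c h
  have k_succ (j : ℕ) : k (j + 1) = h * c ^ j := shiftedThreshold_succ c h j
  let a := γ / 2 * ((c + 1) / (c - 1))
  let b := γ * (1 / 2 - h / (c - 1))
  have weights_sum : ∑ j ∈ Finset.range (N + 1), (P j - P (j + 1)) = 1 := by
    rw [Finset.sum_range_sub', hP0, hPN, sub_zero]
  have by_parts : ∑ j ∈ Finset.range (N + 1), (P j - P (j + 1)) * k (j + 1) =
      ∑ j ∈ Finset.range (N + 1), P j * (k (j + 1) - k j) := by
    rw [sum_range_sub_succ_mul_succ, k_zero, hPN, mul_zero, zero_mul, sub_zero, add_zero]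
  calc
    _ = ∑ j ∈ Finset.range (N + 1),
          (a * ((P j - P (j + 1)) * k (j + 1)) + b * (P j - P (j + 1))) := by
      refine Finset.sum_congr rfl fun j _ => ?_
      rw [sum_range_mul_pow_add_half hc, k_succ]
      ring
    _ = a * ∑ j ∈ Finset.range (N + 1), P j * (k (j + 1) - k j) + b := by
      rw [Finset.sum_add_distrib, ← Finset.mul_sum, ← Finset.mul_sum, by_parts, weights_sum,
        mul_one]
    _ = _ := by
      simp only [k_succ]
      rfl

end ColorThreshold

/-- With `k_j = h c^j` (and `k_{-1} = 0`) and survival probabilities `p_{-1} = 1`, `p_N = 0`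
(encoded as `P j = p_{j-1}` with `P 0 = 1`, `P (N+1) = 0`):
`∑_{j=0}^N (p_{j-1} - p_j) γ (∑_{i<j} k_i + (k_j+1)/2)
  = (γ/2)((c+1)/(c-1)) ∑_{j=0}^N p_{j-1} (k_j - k_{j-1}) + γ (1/2 - h/(c-1))`. -/
theorem stmt9 (c h γ : ℝ) (hc : 1 < c) (hh : 0 < h) (hγ : 0 ≤ γ)
    (N : ℕ) (hN : 0 < N) (P : ℕ → ℝ) (hP0 : P 0 = 1) (hPN : P (N + 1) = 0) :
    ∑ j ∈ Finset.range (N + 1), (P j - P (j + 1)) * γ *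
        ((∑ i ∈ Finset.range j, h * c ^ i) + (h * c ^ j + 1) / 2)
      = (γ / 2) * ((c + 1) / (c - 1)) *
          (∑ j ∈ Finset.range (N + 1),
            P j * (h * c ^ j - if j = 0 then 0 else h * c ^ (j - 1)))
        + γ * (1 / 2 - h / (c - 1)) :=
  stmt9_general hc.ne' h γ N P hP0 hPN
end

section
/- Let ρ ∈ (0,1] and c > 1 be real numbers with c·(1−ρ) < 1, and let N ≥ 1 be an integer. Let Δ_0, …, Δ_N be nonnegative reals with Δ_0 + Δ_1 = c·Δ_0 and Δ_j = c·Δ_{j−1} for 2 ≤ j ≤ N. Let y_{−1}, y_0, …, y_{N−1} ∈ [0,1] with y_{−1} = 0, and let p_{−1}, p_0, …, p_{N−1} ∈ [0,1] with p_{−1} = 1 satisfy p_j ≤ ρ·(1 − y_j) + (1−ρ)·p_{j−1} for 0 ≤ j ≤ N−1. Then Σ_{j=0}^{N} p_{j−1}·Δ_j ≤ (ρ/(1 − c·(1−ρ)))·Σ_{j=0}^{N} (1 − y_{j−1})·Δ_j. -/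
/-!
Put `b = 1 - Y`, `σ = 1 - ρ`, `p = P` and `S = ∑ p j * Δ j`. The normalization `P 0 = 1`, `Y 0 = 0`
gives `p 0 ≤ ρ * b 0 + σ * p 0`, which is the recurrence with `p 0` as its own predecessor.
Multiplying the recurrence by the gaps and summing bounds `S` by `ρ * ∑ b j * Δ j` plus `σ` times
the sum that pairs each gap with the preceding value of `p`. In the latter sum `p 0` has the weight
`Δ 0 + Δ 1 ≤ c * Δ 0`, and `p j` has the weight `Δ (j + 1) ≤ c * Δ j` for `1 ≤ j`, so it is at most
`c * S`. Hence `S ≤ ρ * ∑ b j * Δ j + σ * (c * S)`.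
-/

open Finset

section OrderedSemiring

variable {R : Type*} [CommSemiring R] [PartialOrder R] [IsOrderedRing R] {p Δ : ℕ → R}

theorem sum_mul_le_of_le_add_mul_prev {ρ σ : R} {b : ℕ → R} {n : ℕ}
    (hΔ : ∀ j ≤ n, 0 ≤ Δ j) (hp0 : p 0 ≤ ρ * b 0 + σ * p 0)
    (hrec : ∀ j < n, p (j + 1) ≤ ρ * b (j + 1) + σ * p j) :
    ∑ j ∈ range (n + 1), p j * Δ j ≤
      ρ * ∑ j ∈ range (n + 1), b j * Δ j +
        σ * (∑ j ∈ range n, p j * Δ (j + 1) + p 0 * Δ 0) := by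
  have hterm : ∀ j ∈ range n,
      p (j + 1) * Δ (j + 1) ≤ (ρ * b (j + 1) + σ * p j) * Δ (j + 1) := fun j hj ↦
    mul_le_mul_of_nonneg_right (hrec j (mem_range.mp hj)) (hΔ (j + 1) (mem_range.mp hj))
  calc ∑ j ∈ range (n + 1), p j * Δ j
      = ∑ j ∈ range n, p (j + 1) * Δ (j + 1) + p 0 * Δ 0 := sum_range_succ' _ n
    _ ≤ ∑ j ∈ range n, (ρ * b (j + 1) + σ * p j) * Δ (j + 1) + (ρ * b 0 + σ * p 0) * Δ 0 :=
        add_le_add (sum_le_sum hterm) (mul_le_mul_of_nonneg_right hp0 (hΔ 0 n.zero_le))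
    _ = ρ * ∑ j ∈ range (n + 1), b j * Δ j +
          σ * (∑ j ∈ range n, p j * Δ (j + 1) + p 0 * Δ 0) := by
        simp only [sum_range_succ', add_mul, mul_assoc, sum_add_distrib, ← mul_sum]
        ring

theorem sum_mul_succ_add_le_of_geometric {c : R} {n : ℕ} (hp : ∀ j ≤ n, 0 ≤ p j)
    (hΔ01 : Δ 0 + Δ 1 ≤ c * Δ 0) (hΔ : ∀ j, 1 ≤ j → j ≤ n → Δ (j + 1) ≤ c * Δ j) :
    ∑ j ∈ range (n + 1), p j * Δ (j + 1) + p 0 * Δ 0 ≤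
      c * ∑ j ∈ range (n + 1), p j * Δ j := by
  have hterm : ∀ j ∈ range n, p (j + 1) * Δ (j + 2) ≤ p (j + 1) * (c * Δ (j + 1)) := fun j hj ↦
    mul_le_mul_of_nonneg_left (hΔ (j + 1) (Nat.le_add_left 1 j) (mem_range.mp hj))
      (hp (j + 1) (mem_range.mp hj))
  calc ∑ j ∈ range (n + 1), p j * Δ (j + 1) + p 0 * Δ 0
      = ∑ j ∈ range n, p (j + 1) * Δ (j + 2) + p 0 * (Δ 0 + Δ 1) := by
        rw [sum_range_succ']
        ring
    _ ≤ ∑ j ∈ range n, p (j + 1) * (c * Δ (j + 1)) + p 0 * (c * Δ 0) :=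
        add_le_add (sum_le_sum hterm) (mul_le_mul_of_nonneg_left hΔ01 (hp 0 n.zero_le))
    _ = c * ∑ j ∈ range (n + 1), p j * Δ j := by
        simp only [sum_range_succ', mul_left_comm _ c, ← mul_sum, ← mul_add]

end OrderedSemiring

theorem stmt10_general {K : Type*} [Field K] [LinearOrder K] [IsStrictOrderedRing K]
    {ρ σ c : K} (hσ : 0 ≤ σ) (hc : 0 ≤ c) (hcσ : c * σ < 1) {N : ℕ} (hN : 1 ≤ N)
    {Δ b p : ℕ → K} (hΔ : ∀ j ≤ N, 0 ≤ Δ j) (hΔ01 : Δ 0 + Δ 1 ≤ c * Δ 0)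
    (hΔrec : ∀ j, 1 ≤ j → j < N → Δ (j + 1) ≤ c * Δ j) (hp : ∀ j ≤ N, 0 ≤ p j)
    (hp0 : p 0 ≤ ρ * b 0 + σ * p 0)
    (hrec : ∀ j < N, p (j + 1) ≤ ρ * b (j + 1) + σ * p j) :
    ∑ j ∈ range (N + 1), p j * Δ j ≤
      ρ / (1 - c * σ) * ∑ j ∈ range (N + 1), b j * Δ j := by
  obtain ⟨n, rfl⟩ := Nat.exists_eq_add_of_le' hN
  set S := ∑ j ∈ range (n + 1 + 1), p j * Δ j with hS
  set B := ∑ j ∈ range (n + 1 + 1), b j * Δ j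
  have hshift : ∑ j ∈ range (n + 1), p j * Δ (j + 1) + p 0 * Δ 0 ≤ c * S :=
    calc ∑ j ∈ range (n + 1), p j * Δ (j + 1) + p 0 * Δ 0
        ≤ c * ∑ j ∈ range (n + 1), p j * Δ j :=
          sum_mul_succ_add_le_of_geometric (fun j hj ↦ hp j (by lia)) hΔ01
            fun j hj hjn ↦ hΔrec j hj (by lia)
      _ ≤ c * S := by
          rw [hS, sum_range_succ _ (n + 1)]
          exact mul_le_mul_of_nonneg_left
            (le_add_of_nonneg_right (mul_nonneg (hp _ le_rfl) (hΔ _ le_rfl))) hc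
  have hself : S ≤ ρ * B + σ * (c * S) :=
    (sum_mul_le_of_le_add_mul_prev hΔ hp0 hrec).trans <| by gcongr
  rw [div_mul_eq_mul_div, le_div_iff₀ (sub_pos.mpr hcσ)]
  linarith

/-- The geometric-recurrence bound in the minimum sum coloring analysis. With
`Δ_0 + Δ_1 = c Δ_0`, `Δ_j = c Δ_{j-1}` for `2 ≤ j ≤ N`, survival probabilities
`p_{j-1}` (encoded as `P j`, `P 0 = p_{-1} = 1`) and coverages `y_{j-1}` (encoded as `Y j`,
`Y 0 = y_{-1} = 0`) satisfying `p_j ≤ ρ (1 - y_j) + (1 - ρ) p_{j-1}`: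
`∑_{j=0}^N p_{j-1} Δ_j ≤ (ρ / (1 - c(1-ρ))) ∑_{j=0}^N (1 - y_{j-1}) Δ_j`. -/
theorem stmt10 (ρ c : ℝ) (hρ0 : 0 < ρ) (hρ1 : ρ ≤ 1) (hc : 1 < c)
    (hcρ : c * (1 - ρ) < 1) (N : ℕ) (hN : 1 ≤ N)
    (Δ : ℕ → ℝ) (hΔ : ∀ j ≤ N, 0 ≤ Δ j)
    (hΔ01 : Δ 0 + Δ 1 = c * Δ 0) (hΔrec : ∀ j, 2 ≤ j → j ≤ N → Δ j = c * Δ (j - 1))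
    (Y : ℕ → ℝ) (hY : ∀ j ≤ N, 0 ≤ Y j ∧ Y j ≤ 1) (hY0 : Y 0 = 0)
    (P : ℕ → ℝ) (hP : ∀ j ≤ N, 0 ≤ P j ∧ P j ≤ 1) (hP0 : P 0 = 1)
    (hrec : ∀ j ≤ N - 1, P (j + 1) ≤ ρ * (1 - Y (j + 1)) + (1 - ρ) * P j) :
    ∑ j ∈ Finset.range (N + 1), P j * Δ j
      ≤ (ρ / (1 - c * (1 - ρ))) * ∑ j ∈ Finset.range (N + 1), (1 - Y j) * Δ j := by
  exact stmt10_general (sub_nonneg.mpr hρ1) (by linarith) hcρ hN hΔ hΔ01.le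
    (fun j hj hjN ↦ (hΔrec (j + 1) (by lia) hjN).le) (fun j hj ↦ (hP j hj).1)
    (by simp [hP0, hY0]) fun j hj ↦ hrec j (by lia)
end

section
/- Let c > 1 and let k ≥ 1 be a real number. For h ≥ 1 define σ(h, k) = min{ h·c^j : j a nonnegative integer, h·c^j ≥ k }. Then ∫_0^1 σ(c^γ, k) dγ = ((c−1)/ln c)·k. -/
/-!
Write `a = log_c (h / k)`. The terms `h c ^ j ≥ k` of the sequence are `k c ^ (a + j)` with
`a + j ≥ 0`, and as long as `a < 1` the least such exponent `a + j` is the fractional part of `a`.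
For `h = c ^ γ` this gives `σ(c ^ γ, k) = k c ^ {γ - log_c k}` for all `γ ∈ [0, 1)`, where `{·}`
is the fractional part. If `γ` is uniform on a unit interval, then so is `{γ - log_c k}`, so the
integral is `k ∫_0^1 c ^ u du`.
-/

theorem isLeast_fract_of_lt_one {R : Type*} [Ring R] [LinearOrder R] [IsStrictOrderedRing R]
    [FloorRing R] {a : R} (ha : a < 1) :
    IsLeast {y : R | ∃ j : ℕ, y = a + j ∧ 0 ≤ y} (Int.fract a) := by
  constructor
  · have floor_nonpos : ⌊a⌋ ≤ 0 := Int.lt_add_one_iff.mp (Int.floor_lt.mpr (by simpa using ha))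
    obtain ⟨j, hj⟩ := Int.eq_ofNat_of_zero_le (neg_nonneg.mpr floor_nonpos)
    refine ⟨j, ?_, Int.fract_nonneg a⟩
    rw [← Int.cast_natCast, ← hj, Int.cast_neg, ← sub_eq_add_neg, Int.self_sub_floor]
  · rintro _ ⟨j, rfl, hj⟩
    calc Int.fract a = Int.fract (a + j) := (Int.fract_add_natCast a j).symm
      _ ≤ a + j := sub_le_self _ (Int.cast_nonneg (Int.floor_nonneg.mpr hj))

theorem integral_comp_fract {E : Type*} [NormedAddCommGroup E] [NormedSpace ℝ E]
    (f : ℝ → E) (a : ℝ) :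
    ∫ x in a..a + 1, f (Int.fract x) = ∫ x in (0 : ℝ)..1, f x := by
  have periodic : Function.Periodic (fun x : ℝ ↦ f (Int.fract x)) 1 :=
    (Int.fract_periodic ℝ).comp f
  calc ∫ x in a..a + 1, f (Int.fract x)
      = ∫ x in (0 : ℝ)..1, f (Int.fract x) := by
        simpa only [zero_add] using periodic.intervalIntegral_add_eq a 0
    _ = ∫ x in (0 : ℝ)..1, f x :=
        intervalIntegral.integral_congr_Ioo_of_le zero_le_one fun x hx ↦
          congrArg f (Int.fract_eq_self.mpr ⟨hx.1.le, hx.2⟩)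

theorem integral_const_rpow {c : ℝ} (hc : 0 < c) (hc' : c ≠ 1) (a b : ℝ) :
    ∫ x in a..b, c ^ x = (c ^ b - c ^ a) / Real.log c := by
  have log_ne_zero : Real.log c ≠ 0 := Real.log_ne_zero_of_pos_of_ne_one hc hc'
  simp only [Real.rpow_def_of_pos hc]
  rw [intervalIntegral.integral_comp_mul_left _ log_ne_zero, integral_exp, smul_eq_mul,
    inv_mul_eq_div]

/-- The number `σ(h, k)`: the least term of the geometric sequence `h, h c, h c², …` that is at
least `k`. The infimum is a minimum when `0 < h` and `1 < c`; it is `0` by convention when no term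
reaches `k`. -/
noncomputable def geomCeil (c h k : ℝ) : ℝ :=
  sInf {t : ℝ | ∃ j : ℕ, t = h * c ^ j ∧ k ≤ t}

section GeomCeil

variable {c h k : ℝ}

theorem isLeast_mul_rpow_fract (hc : 1 < c) (hh : 0 < h) (hk : 0 < k) (hlt : h < k * c) :
    IsLeast {t : ℝ | ∃ j : ℕ, t = h * c ^ j ∧ k ≤ t}
      (k * c ^ Int.fract (Real.logb c (h / k))) := by
  have hc₀ : 0 < c := zero_lt_one.trans hc
  set a := Real.logb c (h / k) with ha
  have a_lt_one : a < 1 := by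
    rw [ha, Real.logb_lt_iff_lt_rpow hc (div_pos hh hk), Real.rpow_one, div_lt_iff₀' hk]
    exact hlt
  have term_eq (j : ℕ) : k * c ^ (a + j) = h * c ^ j := by
    rw [Real.rpow_add_natCast hc₀.ne', ha, Real.rpow_logb hc₀ hc.ne' (div_pos hh hk)]
    field_simp
  have le_iff (y : ℝ) : k ≤ k * c ^ y ↔ 0 ≤ y := by
    rw [le_mul_iff_one_le_right hk, ← Real.rpow_zero c, Real.rpow_le_rpow_left_iff hc]
  have monotone : Monotone fun y : ℝ ↦ k * c ^ y :=
    (Real.monotone_rpow_of_base_ge_one hc.le).const_mul hk.le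
  have terms_eq_image : {t : ℝ | ∃ j : ℕ, t = h * c ^ j ∧ k ≤ t} =
      (fun y : ℝ ↦ k * c ^ y) '' {y : ℝ | ∃ j : ℕ, y = a + j ∧ 0 ≤ y} := by
    ext t
    constructor
    · rintro ⟨j, rfl, hj⟩
      rw [← term_eq, le_iff] at hj
      exact ⟨a + j, ⟨j, rfl, hj⟩, term_eq j⟩
    · rintro ⟨_, ⟨j, rfl, hj⟩, rfl⟩
      exact ⟨j, term_eq j, (le_iff _).mpr hj⟩
  rw [terms_eq_image]
  exact monotone.map_isLeast (isLeast_fract_of_lt_one a_lt_one)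

theorem geomCeil_eq_mul_rpow_fract (hc : 1 < c) (hh : 0 < h) (hk : 0 < k) (hlt : h < k * c) :
    geomCeil c h k = k * c ^ Int.fract (Real.logb c (h / k)) :=
  (isLeast_mul_rpow_fract hc hh hk hlt).csInf_eq

theorem geomCeil_rpow (hc : 1 < c) (hk : 0 < k) {γ : ℝ} (hγ : γ < Real.logb c k + 1) :
    geomCeil c (c ^ γ) k = k * c ^ Int.fract (γ - Real.logb c k) := by
  have hc₀ : 0 < c := zero_lt_one.trans hc
  have rpow_lt : c ^ γ < k * c :=
    calc c ^ γ < c ^ (Real.logb c k + 1) := Real.rpow_lt_rpow_of_exponent_lt hc hγ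
      _ = k * c := by rw [Real.rpow_add_one hc₀.ne', Real.rpow_logb hc₀ hc.ne' hk]
  have hcγ : 0 < c ^ γ := Real.rpow_pos_of_pos hc₀ γ
  rw [geomCeil_eq_mul_rpow_fract hc hcγ hk rpow_lt, Real.logb_div hcγ.ne' hk.ne',
    Real.logb_rpow hc₀ hc.ne']

end GeomCeil

/-- For `c > 1` and `k ≥ 1`, with `σ(h, k)` the smallest element of `h, hc, hc², …` that is
at least `k`, we have `∫_0^1 σ(c^γ, k) dγ = ((c - 1)/ln c) k`. -/
theorem stmt12 (c k : ℝ) (hc : 1 < c) (hk : 1 ≤ k) :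
    ∫ γ in (0:ℝ)..1, sInf {t : ℝ | ∃ j : ℕ, t = c ^ γ * c ^ j ∧ k ≤ t}
      = ((c - 1) / Real.log c) * k := by
  have hk₀ : 0 < k := zero_lt_one.trans_le hk
  have logb_nonneg : 0 ≤ Real.logb c k := Real.logb_nonneg hc hk
  set x := Real.logb c k
  calc ∫ γ in (0:ℝ)..1, geomCeil c (c ^ γ) k
      = ∫ γ in (0:ℝ)..1, k * c ^ Int.fract (γ - x) :=
        intervalIntegral.integral_congr_Ioo_of_le zero_le_one fun γ hγ ↦
          geomCeil_rpow hc hk₀ (hγ.2.trans_le (le_add_of_nonneg_left logb_nonneg))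
    _ = k * ∫ u in -x..-x + 1, c ^ Int.fract u := by
        rw [intervalIntegral.integral_const_mul,
          intervalIntegral.integral_comp_sub_right (fun u ↦ c ^ Int.fract u), zero_sub,
          neg_add_eq_sub]
    _ = k * ∫ u in (0:ℝ)..1, c ^ u := by rw [integral_comp_fract (fun u ↦ c ^ u)]
    _ = ((c - 1) / Real.log c) * k := by
        rw [integral_const_rpow (zero_lt_one.trans hc) hc.ne', Real.rpow_one, Real.rpow_zero,
          mul_comm]
end

section
/- There exists a unique real number μ > 1 satisfying μ·ln μ = μ + 1; this μ lies in the interval (3.59, 3.60), and for every real c > 1 one has (c+1)/(2·ln c) ≥ μ/2, with equality when c = μ. -/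
/-!
With `klFun x = x log x + 1 - x`, the equation `μ log μ = μ + 1` reads `klFun μ = 2`. Since `klFun`
has derivative `log`, it is an increasing bijection from `(1, ∞)` to `(0, ∞)`, which gives existence
and uniqueness of `μ` and reduces locating it to comparing `klFun 3.59` and `klFun 3.60` with `2`.
Optimality of `c = μ` is the tangent line inequality of `log` at `μ`: `μ log c ≤ μ log μ + c - μ`,
whose right-hand side equals `c + 1`.
-/

open Real Set InformationTheory

lemma strictMonoOn_klFun : StrictMonoOn klFun (Ici 1) := by
  refine strictMonoOn_of_deriv_pos (convex_Ici 1) continuous_klFun.continuousOn fun x hx ↦ ?_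
  rw [interior_Ici] at hx
  simpa only [deriv_klFun] using log_pos hx

lemma bijOn_klFun : BijOn klFun (Ioi 1) (Ioi 0) := by
  have image_eq : klFun '' Ioi 1 = Ioi 0 := by
    rw [← klFun_one]
    exact continuous_klFun.continuousOn.image_Ioi_of_strictMonoOn strictMonoOn_klFun
      tendsto_klFun_atTop
  exact image_eq ▸ (strictMonoOn_klFun.mono Ioi_subset_Ici_self).injOn.bijOn_image

lemma mul_log_eq_add_iff_klFun_eq {x a : ℝ} : x * log x = x + a ↔ klFun x = a + 1 := by
  rw [klFun_apply]
  constructor <;> intro h <;> linarith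

lemma mul_log_le_mul_log_add_sub {x y : ℝ} (hx : 0 < x) (hy : 0 < y) :
    x * log y ≤ x * log x + y - x := by
  have log_div_le : log y - log x ≤ y / x - 1 := by
    simpa only [log_div hy.ne' hx.ne'] using log_le_sub_one_of_pos (div_pos hy hx)
  calc
    x * log y = x * log x + x * (log y - log x) := by ring
    _ ≤ x * log x + x * (y / x - 1) := by gcongr
    _ = x * log x + y - x := by field_simp; ring

section MinimizerAddDivLog

variable {m a : ℝ}

lemma le_add_div_log (hm : 0 < m) (h : m * log m = m + a) {c : ℝ} (hc : 1 < c) :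
    m ≤ (c + a) / log c := by
  rw [le_div_iff₀ (log_pos hc)]
  linarith [mul_log_le_mul_log_add_sub hm (zero_lt_one.trans hc)]

lemma add_div_log_eq_self (hm : log m ≠ 0) (h : m * log m = m + a) : (m + a) / log m = m :=
  (eq_div_of_mul_eq hm h).symm

end MinimizerAddDivLog

lemma log_eighteen_div_five_eq : log (18 / 5) = log 2 + 2 * log 3 - log 5 := by
  rw [show (18 : ℝ) = 2 * 3 ^ 2 by norm_num, log_div (by norm_num) (by norm_num),
    log_mul (by norm_num) (by norm_num), log_pow]
  norm_cast

lemma two_lt_klFun_three_point_six : 2 < klFun 3.60 := by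
  have log_gt : 1.28 < log (18 / 5) := by
    linarith [log_eighteen_div_five_eq, log_two_gt_d9, log_three_gt_d9, log_five_lt_d9]
  rw [klFun_apply, show (3.60 : ℝ) = 18 / 5 by norm_num]
  linarith

-- `log 3.59 < log 3.60` alone is too weak here, so `log 3.59` is bounded by the tangent at `3.60`.
lemma klFun_three_point_five_nine_lt_two : klFun 3.59 < 2 := by
  have log_lt : log (18 / 5) < 1.281 := by
    linarith [log_eighteen_div_five_eq, log_two_lt_d9, log_three_lt_d9, log_five_gt_d9]
  have tangent := mul_log_le_mul_log_add_sub (x := 18 / 5) (y := 3.59) (by norm_num) (by norm_num)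
  rw [klFun_apply]
  linarith

/-- There is a unique real `μ > 1` with `μ ln μ = μ + 1`; it lies in `(3.59, 3.60)`, and for
every `c > 1` one has `(c+1)/(2 ln c) ≥ μ/2`, with equality at `c = μ`. -/
theorem stmt14 :
    ∃ μ : ℝ, (1 < μ ∧ μ * Real.log μ = μ + 1) ∧
      (∀ μ' : ℝ, 1 < μ' → μ' * Real.log μ' = μ' + 1 → μ' = μ) ∧
      3.59 < μ ∧ μ < 3.60 ∧
      (∀ c : ℝ, 1 < c → μ / 2 ≤ (c + 1) / (2 * Real.log c)) ∧
      (μ + 1) / (2 * Real.log μ) = μ / 2 := by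
  obtain ⟨μ, one_lt : 1 < μ, klFun_eq⟩ := bijOn_klFun.surjOn (mem_Ioi.mpr two_pos)
  have root : μ * log μ = μ + 1 := mul_log_eq_add_iff_klFun_eq.mpr (by linarith)
  refine ⟨μ, ⟨one_lt, root⟩, fun ν hν root_ν ↦ ?_, ?_, ?_, fun c hc ↦ ?_, ?_⟩
  · have klFun_ν : klFun ν = 2 := by linarith [mul_log_eq_add_iff_klFun_eq.mp root_ν]
    exact bijOn_klFun.injOn hν one_lt (klFun_ν.trans klFun_eq.symm)
  · refine (strictMonoOn_klFun.lt_iff_lt (by norm_num) one_lt.le).mp ?_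
    exact klFun_eq ▸ klFun_three_point_five_nine_lt_two
  · refine (strictMonoOn_klFun.lt_iff_lt one_lt.le (by norm_num)).mp ?_
    exact klFun_eq ▸ two_lt_klFun_three_point_six
  · rw [mul_comm, ← div_div]
    gcongr
    exact le_add_div_log (zero_lt_one.trans one_lt) root hc
  · rw [mul_comm, ← div_div, add_div_log_eq_self (log_pos one_lt).ne' root]
end
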